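/- arXiv:1911.00358 — 2 statements merged into one kernel-verified Lean document; each statement's English description precedes it below -/
import Mathlib

section
/- For every integer n ≥ 2, the (n+1)-dimensional n-ary Filippov algebra C₂(−1/4) degenerates to C₃; that is, the structure of C₃ lies in the closure of the GL(V)-orbit of the structure of C₂(−1/4). -/
open Function Submodule

/-! Common framework: `V = ℂ^{n+1}`, `n`-ary multiplications as functions
`(Fin n → V) → V`, the action of `GL(V)` on them, orbits, and the
(n+1)-dimensional n-ary Filippov algebras of Kaygorodov–Volkov, each described
as an alternating `n`-linear map by its values on the increasing tuples of
distinct standard basis vectors (0-indexed: `bt n j` is the tuple omitting `e j`). -/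

/-- The underlying space `V = ℂ^{n+1}`. -/
abbrev nV (n : ℕ) : Type := Fin (n + 1) → ℂ

/-- The `j`-th standard basis vector of `V` (0-indexed). -/
def sb (n : ℕ) (j : Fin (n + 1)) : nV n := Pi.single j 1

/-- The increasing `n`-tuple of standard basis vectors omitting `e j`. -/
def bt (n : ℕ) (j : Fin (n + 1)) : Fin n → nV n := fun k => sb n (j.succAbove k)

/-- The action of `GL(V)` (invertible linear maps) on `n`-ary multiplications:
`(g • μ)(x₁, …, xₙ) = g (μ (g⁻¹ x₁, …, g⁻¹ xₙ))`. -/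
noncomputable def glAct (n : ℕ) (g : nV n ≃ₗ[ℂ] nV n) (μ : (Fin n → nV n) → nV n) :
    (Fin n → nV n) → nV n :=
  fun x => g (μ fun i => g.symm (x i))

/-- The `GL(V)`-orbit of an `n`-ary multiplication. -/
def glOrbit (n : ℕ) (μ : (Fin n → nV n) → nV n) : Set ((Fin n → nV n) → nV n) :=
  {ν | ∃ g : nV n ≃ₗ[ℂ] nV n, ν = glAct n g μ}

/-- The algebra `B`: `[e₂, …, e_{n+1}] = e₁` (0-indexed: the tuple omitting `e 0`
maps to `e 0`), all other increasing basis products zero. -/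
def IsB (n : ℕ) (μ : AlternatingMap ℂ (nV n) (nV n) (Fin n)) : Prop :=
  μ (bt n 0) = sb n 0 ∧ ∀ j : Fin (n + 1), j ≠ 0 → μ (bt n j) = 0

/-- The algebra `C₁`: `[e₂, …, e_{n+1}] = e₁`, `[e₁, e₃, …, e_{n+1}] = e₂`. -/
def IsC1 (n : ℕ) (μ : AlternatingMap ℂ (nV n) (nV n) (Fin n)) : Prop :=
  μ (bt n 0) = sb n 0 ∧ μ (bt n 1) = sb n 1 ∧
    ∀ j : Fin (n + 1), j ≠ 0 → j ≠ 1 → μ (bt n j) = 0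

/-- The algebra `C₂(α)`: `[e₂, …, e_{n+1}] = α e₁ + e₂`, `[e₁, e₃, …, e_{n+1}] = e₂`. -/
def IsC2 (n : ℕ) (α : ℂ) (μ : AlternatingMap ℂ (nV n) (nV n) (Fin n)) : Prop :=
  μ (bt n 0) = α • sb n 0 + sb n 1 ∧ μ (bt n 1) = sb n 1 ∧
    ∀ j : Fin (n + 1), j ≠ 0 → j ≠ 1 → μ (bt n j) = 0

/-- The algebra `C₃`: `[e₁, e₃, …, e_{n+1}] = e₁`, `[e₂, e₃, …, e_{n+1}] = e₂`. -/
def IsC3 (n : ℕ) (μ : AlternatingMap ℂ (nV n) (nV n) (Fin n)) : Prop :=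
  μ (bt n 1) = sb n 0 ∧ μ (bt n 0) = sb n 1 ∧
    ∀ j : Fin (n + 1), j ≠ 0 → j ≠ 1 → μ (bt n j) = 0

/-- The algebra `D_r`: `[e₁, …, e_{i-1}, e_{i+1}, …, e_{n+1}] = e_i` for `1 ≤ i ≤ r`
(0-indexed: the tuple omitting `e j` maps to `e j` for `j < r` and to `0` otherwise). -/
def IsD (n r : ℕ) (μ : AlternatingMap ℂ (nV n) (nV n) (Fin n)) : Prop :=
  ∀ j : Fin (n + 1), ((j : ℕ) < r → μ (bt n j) = sb n j) ∧ (r ≤ (j : ℕ) → μ (bt n j) = 0)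

/-!
The increasing `n`-tuples of basis vectors are indexed by the omitted vector, so an alternating
`μ : Vⁿ → V` is determined by its values on them: `μ x = ∑ j, Mⱼ x • [e₁, …, êⱼ, …, e_{n+1}]`, where
`Mⱼ` is the minor omitting the `j`-th coordinate (`coordMinor (j - 1)` in 0-indexed notation). If
`μ` takes values in `⟨e₁, e₂⟩` and only `M₁` and `M₂` occur, its coefficients on `M₁` and `-M₂` form
a `2 × 2` matrix; a basis change of `⟨e₁, e₂⟩` acts on it, up to a scalar, as on `⟨e₁, e₂⟩^{⊗2}`.
`C₃` is antisymmetric; `C₂(α)` has antisymmetric part `C₃ / 2` and a symmetric part of determinant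
`-α - 1/4`. So for `α = -1/4` the symmetric part has rank one: it is a multiple of the square of
`e₁ - 2 e₂`. In the basis `e₁ - 2 e₂, t e₂, 2 e₃, e₄, …` the antisymmetric part becomes exactly `C₃`
(the `2` in front of `e₃` corrects the scalar), while the symmetric part acquires the factor `2 t`
and disappears as `t → 0`.
-/

section CoordMinor

variable {R M : Type*} [CommRing R] [AddCommGroup M] [Module R M] {n : ℕ}

/-- The maximal minor of `n` vectors of `R^{n+1}` in which the `j`-th coordinate is omitted, as an
alternating form; no sign is attached, so that these forms are dual to the tuples `bt n j`. -/
def coordMinor (j : Fin (n + 1)) : (Fin (n + 1) → R) [⋀^Fin n]→ₗ[R] R :=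
  Matrix.detRowAlternating.compLinearMap (LinearMap.funLeft R R j.succAbove)

theorem coordMinor_apply (j : Fin (n + 1)) (x : Fin n → Fin (n + 1) → R) :
    coordMinor j x = (Matrix.of fun i k => x i (j.succAbove k)).det :=
  rfl

theorem coordMinor_single_succAbove (j k : Fin (n + 1)) :
    coordMinor j (fun i => Pi.single (k.succAbove i) (1 : R)) = if j = k then 1 else 0 := by
  rw [coordMinor_apply]
  split_ifs with hjk
  · subst hjk
    convert Matrix.det_one (R := R) (n := Fin n)
    ext i l
    simp [Matrix.one_apply, Pi.single_apply, eq_comm]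
  · obtain ⟨i, rfl⟩ := Fin.exists_succAbove_eq hjk
    refine Matrix.det_eq_zero_of_row_eq_zero i fun l => ?_
    simp [Fin.succAbove_ne]

theorem alternatingMap_ext_single_succAbove {f g : (Fin (n + 1) → R) [⋀^Fin n]→ₗ[R] M}
    (h : ∀ j : Fin (n + 1), f (fun i => Pi.single (j.succAbove i) 1) =
      g (fun i => Pi.single (j.succAbove i) 1)) : f = g := by
  refine Module.Basis.ext_alternating (Pi.basisFun R (Fin (n + 1))) fun v hv => ?_
  obtain ⟨j, hj⟩ : ∃ j, ∀ k, v k ≠ j := by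
    by_contra! hsurj
    simpa using Fintype.card_le_of_surjective v hsurj
  choose s hs using fun k => Fin.exists_succAbove_eq (hj k)
  have hs_inj : Injective s := fun a b hab => hv (by rw [← hs a, ← hs b, hab])
  let σ := Equiv.ofBijective s (Finite.injective_iff_bijective.mp hs_inj)
  have hσ : (fun k => Pi.basisFun R (Fin (n + 1)) (v k)) =
      (fun i => Pi.single (j.succAbove i) 1) ∘ σ := by
    funext k
    simp [σ, hs]
  rw [hσ, f.map_perm, g.map_perm, h]

theorem alternatingMap_apply_eq_sum_coordMinor (f : (Fin (n + 1) → R) [⋀^Fin n]→ₗ[R] M)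
    (x : Fin n → Fin (n + 1) → R) :
    f x = ∑ j, coordMinor j x • f (fun i => Pi.single (j.succAbove i) 1) := by
  let expansion : (Fin (n + 1) → R) [⋀^Fin n]→ₗ[R] M :=
    ∑ j : Fin (n + 1), (LinearMap.toSpanSingleton R M
      (f fun i => Pi.single (j.succAbove i) 1)).compAlternatingMap (coordMinor j)
  have expansion_apply (y) : expansion y =
      ∑ j, coordMinor j y • f (fun i => Pi.single (j.succAbove i) 1) := by
    let eval_y : (Fin (n + 1) → R) [⋀^Fin n]→ₗ[R] M →+ M :=
      { toFun := fun g => g y, map_zero' := rfl, map_add' := fun _ _ => rfl }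
    exact map_sum eval_y _ _
  rw [← expansion_apply]
  congr 1
  refine alternatingMap_ext_single_succAbove fun k => ?_
  simp [expansion_apply, coordMinor_single_succAbove]

theorem coordMinor_congr {j : Fin (n + 1)} {x y : Fin n → Fin (n + 1) → R}
    (h : ∀ i, ∀ l ≠ j, x i l = y i l) : coordMinor j x = coordMinor j y := by
  simp only [coordMinor_apply, h _ _ (Fin.succAbove_ne j _)]

theorem coordMinor_mul (j : Fin (n + 1)) (d : Fin (n + 1) → R) (x : Fin n → Fin (n + 1) → R) :
    coordMinor j (fun i => d * x i) = (∏ k, d (j.succAbove k)) * coordMinor j x :=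
  Matrix.det_mul_row (fun k => d (j.succAbove k)) (Matrix.of fun i k => x i (j.succAbove k))

theorem coordMinor_transvection_self (j l : Fin (n + 1)) (c : R)
    (x : Fin n → Fin (n + 1) → R) :
    coordMinor j (fun i => LinearMap.transvection (.proj l) (Pi.single j c) (x i)) =
      coordMinor j x :=
  coordMinor_congr fun i k hk => by simp [LinearMap.transvection.apply, hk]

theorem coordMinor_transvection_castSucc (k : Fin n) (c : R) (x : Fin n → Fin (n + 1) → R) :
    coordMinor k.castSucc
        (fun i => LinearMap.transvection (.proj k.castSucc) (Pi.single k.succ c) (x i)) =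
      coordMinor k.castSucc x + c * coordMinor k.succ x := by
  let A : Matrix (Fin n) (Fin n) R := .of fun i l => x i (k.castSucc.succAbove l)
  have succAbove_of_ne {l : Fin n} (hl : l ≠ k) :
      k.castSucc.succAbove l = k.succ.succAbove l ∧ k.castSucc.succAbove l ≠ k.succ := by
    grind [Fin.succAbove]
  have h_sheared : (Matrix.of fun i l => LinearMap.transvection (.proj k.castSucc)
      (Pi.single k.succ c) (x i) (k.castSucc.succAbove l)) =
      A.updateCol k ((fun i => A i k) + c • fun i => x i k.castSucc) := by
    ext i l
    obtain rfl | hl := eq_or_ne l k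
    · simp [A, LinearMap.transvection.apply, mul_comm]
    · simp [A, LinearMap.transvection.apply, hl, succAbove_of_ne hl]
  have h_succ : A.updateCol k (fun i => x i k.castSucc) =
      .of fun i l => x i (k.succ.succAbove l) := by
    ext i l
    obtain rfl | hl := eq_or_ne l k
    · simp
    · simp [A, hl, succAbove_of_ne hl]
  rw [coordMinor_apply, h_sheared, Matrix.det_updateCol_add, Matrix.det_updateCol_smul,
    Matrix.updateCol_eq_self, h_succ]
  rfl

end CoordMinor

theorem mem_closure_of_forall_add_smul_mem {𝕜 E : Type*} [NontriviallyNormedField 𝕜]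
    [AddCommGroup E] [Module 𝕜 E] [TopologicalSpace E] [ContinuousAdd E] [ContinuousSMul 𝕜 E]
    {s : Set E} {a v : E} (h : ∀ t : 𝕜ˣ, a + (t : 𝕜) • v ∈ s) : a ∈ closure s := by
  have h_cont : Continuous fun t : 𝕜 => a + t • v := by fun_prop
  have h_lim : Filter.Tendsto (fun t : 𝕜 => a + t • v) (nhdsWithin 0 {0}ᶜ) (nhds a) := by
    simpa using (h_cont.tendsto 0).mono_left nhdsWithin_le_nhds
  refine mem_closure_of_tendsto h_lim ?_
  filter_upwards [self_mem_nhdsWithin] with t ht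
  exact h (Units.mk0 t ht)

theorem glAct_symm_eq_iff {n : ℕ} {μ ν : (Fin n → nV n) → nV n} {g : nV n ≃ₗ[ℂ] nV n} :
    glAct n g.symm μ = ν ↔ ∀ x, μ (fun i => g (x i)) = g (ν x) := by
  simp only [funext_iff, glAct, LinearEquiv.symm_symm, LinearEquiv.symm_apply_eq]

section Expansion

variable {n : ℕ} {μ : AlternatingMap ℂ (nV (n + 1)) (nV (n + 1)) (Fin (n + 1))}

theorem apply_eq_of_bt_eq_zero
    (hμ : ∀ j : Fin (n + 2), j ≠ 0 → j ≠ 1 → μ (bt (n + 1) j) = 0) (x : Fin (n + 1) → nV (n + 1)) :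
    μ x = coordMinor 0 x • μ (bt (n + 1) 0) + coordMinor 1 x • μ (bt (n + 1) 1) := by
  have h_expand : μ x = ∑ j, coordMinor j x • μ (bt (n + 1) j) :=
    alternatingMap_apply_eq_sum_coordMinor μ x
  rw [h_expand]
  refine Fintype.sum_eq_add 0 1 (by simp) fun j hj => ?_
  rw [hμ j hj.1 hj.2, smul_zero]

theorem IsC2.apply_eq {α : ℂ} (hμ : IsC2 (n + 1) α μ) (x : Fin (n + 1) → nV (n + 1)) :
    μ x = coordMinor 0 x • (α • sb (n + 1) 0 + sb (n + 1) 1) + coordMinor 1 x • sb (n + 1) 1 := by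
  rw [apply_eq_of_bt_eq_zero hμ.2.2, hμ.1, hμ.2.1]

theorem IsC3.apply_eq (hμ : IsC3 (n + 1) μ) (x : Fin (n + 1) → nV (n + 1)) :
    μ x = coordMinor 0 x • sb (n + 1) 1 + coordMinor 1 x • sb (n + 1) 0 := by
  rw [apply_eq_of_bt_eq_zero hμ.2.2, hμ.1, hμ.2.1]

end Expansion

section QuarterBasisChange

variable {m : ℕ}

/-- The diagonal part `diag(1, t, 2, 1, …, 1)` of `quarterBasisChange`. -/
noncomputable def quarterScale (m : ℕ) (t : ℂˣ) : Fin (m + 3) → ℂˣ :=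
  Fin.cons 1 (Fin.cons t (Fin.cons (Units.mk0 2 two_ne_zero) fun _ => 1))

/-- The change of basis `e₁ ↦ e₁ - 2 e₂`, `e₂ ↦ t e₂`, `e₃ ↦ 2 e₃`, `eᵢ ↦ eᵢ` for `i > 3`, whose
inverse moves `C₂(-1/4)` towards `C₃` as `t → 0`; encoded as a diagonal scaling followed by a
transvection. -/
noncomputable def quarterBasisChange (m : ℕ) (t : ℂˣ) : nV (m + 2) ≃ₗ[ℂ] nV (m + 2) :=
  (LinearEquiv.piCongrRight fun i => LinearEquiv.smulOfUnit (quarterScale m t i)).trans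
    (LinearEquiv.transvection (f := .proj 0) (v := Pi.single 1 (-2)) (by simp))

theorem quarterBasisChange_apply (t : ℂˣ) (y : nV (m + 2)) :
    quarterBasisChange m t y = LinearMap.transvection (.proj 0) (Pi.single 1 (-2))
      ((fun i => (quarterScale m t i : ℂ)) * y) :=
  rfl

theorem quarterBasisChange_sb_zero (t : ℂˣ) :
    quarterBasisChange m t (sb (m + 2) 0) = sb (m + 2) 0 - (2 : ℂ) • sb (m + 2) 1 := by
  have h_scale : (fun i => (quarterScale m t i : ℂ)) * sb (m + 2) 0 = sb (m + 2) 0 := by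
    simp [sb, ← Pi.single_mul_right, quarterScale]
  rw [quarterBasisChange_apply, h_scale]
  simp [LinearMap.transvection.apply, sb, ← Pi.single_smul, sub_eq_add_neg, ← Pi.single_neg]

theorem quarterBasisChange_sb_one (t : ℂˣ) :
    quarterBasisChange m t (sb (m + 2) 1) = (t : ℂ) • sb (m + 2) 1 := by
  have h_scale : (fun i => (quarterScale m t i : ℂ)) * sb (m + 2) 1 = (t : ℂ) • sb (m + 2) 1 := by
    simp [sb, ← Pi.single_mul_right, ← Pi.single_smul, quarterScale]
  rw [quarterBasisChange_apply, h_scale]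
  simp [LinearMap.transvection.apply, sb]

theorem prod_quarterScale_zero_succAbove (t : ℂˣ) :
    ∏ k, (quarterScale m t ((0 : Fin (m + 3)).succAbove k) : ℂ) = t * 2 := by
  simp [Fin.prod_univ_succ, quarterScale]

theorem prod_quarterScale_one_succAbove (t : ℂˣ) :
    ∏ k, (quarterScale m t ((1 : Fin (m + 3)).succAbove k) : ℂ) = 2 := by
  simp [Fin.prod_univ_succ, quarterScale]

theorem coordMinor_zero_quarterBasisChange (t : ℂˣ) (x : Fin (m + 2) → nV (m + 2)) :
    coordMinor 0 (fun i => quarterBasisChange m t (x i)) =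
      2 * t * coordMinor 0 x - 4 * coordMinor 1 x := by
  simp only [quarterBasisChange_apply]
  refine (coordMinor_transvection_castSucc 0 (-2) _).trans ?_
  rw [Fin.castSucc_zero, Fin.succ_zero_eq_one, coordMinor_mul, coordMinor_mul,
    prod_quarterScale_zero_succAbove, prod_quarterScale_one_succAbove]
  ring

theorem coordMinor_one_quarterBasisChange (t : ℂˣ) (x : Fin (m + 2) → nV (m + 2)) :
    coordMinor 1 (fun i => quarterBasisChange m t (x i)) = 2 * coordMinor 1 x := by
  simp only [quarterBasisChange_apply]
  rw [coordMinor_transvection_self, coordMinor_mul, prod_quarterScale_one_succAbove]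

theorem glAct_quarterBasisChange_symm
    {μ ν : AlternatingMap ℂ (nV (m + 2)) (nV (m + 2)) (Fin (m + 2))}
    (hμ : IsC2 (m + 2) (-(1 / 4)) μ) (hν : IsC3 (m + 2) ν) (t : ℂˣ) :
    glAct (m + 2) (quarterBasisChange m t).symm μ =
      ⇑ν + (t : ℂ) • fun x => (-(1 / 2) * coordMinor 0 x) • sb (m + 2) 0 := by
  refine glAct_symm_eq_iff.mpr fun x => ?_
  simp only [Pi.add_apply, Pi.smul_apply, hμ.apply_eq, hν.apply_eq,
    coordMinor_zero_quarterBasisChange, coordMinor_one_quarterBasisChange, map_add, map_smul,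
    quarterBasisChange_sb_zero, quarterBasisChange_sb_one]
  module

end QuarterBasisChange

/-- For every integer `n ≥ 2`, the algebra `C₂(-1/4)` degenerates to `C₃`. -/
theorem C2_quarter_degenerates_to_C3 (n : ℕ) (hn : 2 ≤ n)
    (μ ν : AlternatingMap ℂ (nV n) (nV n) (Fin n))
    (hμ : IsC2 n (-(1 / 4) : ℂ) μ) (hν : IsC3 n ν) :
    ⇑ν ∈ closure (glOrbit n ⇑μ) := by
  obtain ⟨m, rfl⟩ := Nat.exists_eq_add_of_le' hn
  exact mem_closure_of_forall_add_smul_mem fun t =>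
    ⟨(quarterBasisChange m t).symm, (glAct_quarterBasisChange_symm hμ hν t).symm⟩
end

section
/- For every integer n ≥ 2, every α ∈ ℂ, and all fundamental objects X, Y of the algebra C₂(α), one has tr(R_X ∘ R_Y) = (2α + 1) · tr(R_X) · tr(R_Y). (Equivalently, for α ≠ −1/2 the (1,1)-invariant of C₂(α) equals 1/(2α+1).) -/
open Function Submodule

/-! Laplace expansion writes an alternating map in `n` variables on a free module of rank `n + 1` as
`f v = ∑ⱼ (-1)ʲ det(bⱼ, v) f(b₀, …, bⱼ₋₁, bⱼ₊₁, …, bₙ)`. For `C₂(α)` only `j = 0, 1` contribute, so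
`R_X z = B(b₀, z) (α b₀ + b₁) - B(b₁, z) b₁`, where `B(x, z) = det(x, z, X)` is an alternating
bilinear form. Traces of operators of rank one then give `tr R_X = B(b₀, b₁)`, while the four terms
of `tr (R_X ∘ R_Y)` are `1`, `α`, `α` and `0` times `tr R_X * tr R_Y`. -/

section RightMultiplication

variable {R M N : Type*} [CommSemiring R] [AddCommMonoid M] [Module R M] [AddCommMonoid N]
  [Module R N]

/-- The right multiplication operator `R_X : z ↦ f (z, X₁, …, Xₙ)`, bundled as a linear function of
the multiplication `f`. -/
def rightMul {n : ℕ} (X : Fin n → M) : (M [⋀^Fin (n + 1)]→ₗ[R] N) →ₗ[R] M →ₗ[R] N :=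
  LinearMap.mk₂ R (fun f z => f (Fin.cons z X)) (fun _ _ _ => rfl) (fun _ _ _ => rfl)
    (fun f => f.map_vecCons_add X) (fun c f => f.map_vecCons_smul X c)

@[simp]
lemma rightMul_apply {n : ℕ} (X : Fin n → M) (f : M [⋀^Fin (n + 1)]→ₗ[R] N) (z : M) :
    rightMul X f z = f (Fin.cons z X) := rfl

/-- The bilinear form `(x, z) ↦ f (x, z, X₁, …, Xₙ)` obtained from an alternating form by fixing all
arguments but the first two. -/
def leadingForm {n : ℕ} (f : M [⋀^Fin (n + 2)]→ₗ[R] R) (X : Fin n → M) : LinearMap.BilinForm R M :=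
  rightMul X ∘ₗ f.curryLeft

lemma leadingForm_isAlt {n : ℕ} (f : M [⋀^Fin (n + 2)]→ₗ[R] R) (X : Fin n → M) :
    (leadingForm f X).IsAlt := fun x => by
  rw [leadingForm, LinearMap.comp_apply, rightMul_apply]
  exact DFunLike.congr_fun (f.curryLeft_same x) X

end RightMultiplication

lemma alternatingMap_sum_apply {R M N ι κ : Type*} [Semiring R] [AddCommMonoid M] [Module R M]
    [AddCommMonoid N] [Module R N] (s : Finset κ) (f : κ → M [⋀^ι]→ₗ[R] N) (v : ι → M) :
    (∑ k ∈ s, f k) v = ∑ k ∈ s, f k v :=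
  map_sum (⟨⟨fun g => g v, rfl⟩, fun _ _ => rfl⟩ : (M [⋀^ι]→ₗ[R] N) →+ N) f s

section LaplaceExpansion

variable {R M N : Type*} [CommRing R] [AddCommGroup M] [Module R M] [AddCommGroup N] [Module R N]

lemma alternatingMap_ext_of_succAbove {n : ℕ} (b : Module.Basis (Fin (n + 1)) R M)
    {f g : M [⋀^Fin n]→ₗ[R] N} (h : ∀ j : Fin (n + 1), f (b ∘ j.succAbove) = g (b ∘ j.succAbove)) :
    f = g := by
  refine b.ext_alternating fun v hv => ?_
  obtain ⟨j, hj⟩ : ∃ j, ∀ i, v i ≠ j := by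
    by_contra! hsurj
    simpa using Fintype.card_le_of_surjective v hsurj
  choose s hs using fun i => Fin.exists_succAbove_eq (hj i)
  have hs_inj : Injective s := fun i k hik => hv (by rw [← hs i, ← hs k, hik])
  let σ : Equiv.Perm (Fin n) := Equiv.ofBijective s (Finite.injective_iff_bijective.mp hs_inj)
  have hσ : (fun i => b (v i)) = (b ∘ j.succAbove) ∘ σ := funext fun i => congrArg b (hs i).symm
  rw [hσ, f.map_perm, g.map_perm, h j]

lemma det_vecCons_comp_succAbove_self {n : ℕ} (b : Module.Basis (Fin (n + 1)) R M)
    (j : Fin (n + 1)) : b.det (Matrix.vecCons (b j) (b ∘ j.succAbove)) = (-1) ^ (j : ℕ) := by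
  have h := b.det.neg_one_pow_smul_map_insertNth j (b j) (j.removeNth b)
  rw [Fin.insertNth_self_removeNth, b.det_self] at h
  exact h.symm.trans (by simp)

lemma det_vecCons_comp_succAbove_of_ne {n : ℕ} (b : Module.Basis (Fin (n + 1)) R M)
    {i j : Fin (n + 1)} (hij : i ≠ j) :
    b.det (Matrix.vecCons (b i) (b ∘ j.succAbove)) = 0 := by
  obtain ⟨k, rfl⟩ := Fin.exists_succAbove_eq hij
  exact b.det.map_eq_zero_of_eq _ (i := 0) (j := k.succ) (by simp) (Fin.succ_ne_zero k).symm

theorem alternatingMap_eq_sum_det_smulRight {n : ℕ} (b : Module.Basis (Fin (n + 1)) R M)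
    (f : M [⋀^Fin n]→ₗ[R] N) :
    f = ∑ j : Fin (n + 1),
      (-1 : R) ^ (j : ℕ) • (b.det.curryLeft (b j)).smulRight (f (b ∘ j.succAbove)) := by
  refine alternatingMap_ext_of_succAbove b fun k => ?_
  rw [alternatingMap_sum_apply, Finset.sum_eq_single k]
  · simp [det_vecCons_comp_succAbove_self, smul_smul, ← mul_pow]
  · intro j _ hjk
    simp [det_vecCons_comp_succAbove_of_ne b hjk]
  · simp

theorem rightMul_eq_sum_smulRight {n : ℕ} (b : Module.Basis (Fin (n + 2)) R M) (X : Fin n → M)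
    (f : M [⋀^Fin (n + 1)]→ₗ[R] N) :
    rightMul X f = ∑ j : Fin (n + 2),
      (-1 : R) ^ (j : ℕ) • (leadingForm b.det X (b j)).smulRight (f (b ∘ j.succAbove)) := by
  conv_lhs => rw [alternatingMap_eq_sum_det_smulRight b f, map_sum]
  rfl

end LaplaceExpansion

section C2Operator

variable {R M : Type*} [CommRing R] [AddCommGroup M] [Module R M]

/-- The operator `z ↦ B(x, z) (α x + y) - B(y, z) y`; the right multiplications of `C₂(α)` have this
form, with `x` and `y` the first two basis vectors. -/
def c2Operator (α : R) (x y : M) (B : LinearMap.BilinForm R M) : M →ₗ[R] M :=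
  (B x).smulRight (α • x + y) - (B y).smulRight y

theorem rightMul_eq_c2Operator {m : ℕ} (b : Module.Basis (Fin (m + 2)) R M) {α : R}
    {μ : M [⋀^Fin (m + 1)]→ₗ[R] M} (h₀ : μ (b ∘ Fin.succAbove 0) = α • b 0 + b 1)
    (h₁ : μ (b ∘ Fin.succAbove 1) = b 1)
    (h : ∀ j : Fin (m + 2), j ≠ 0 → j ≠ 1 → μ (b ∘ j.succAbove) = 0) (X : Fin m → M) :
    rightMul X μ = c2Operator α (b 0) (b 1) (leadingForm b.det X) := by
  have h_tail (j : Fin m) : μ (b ∘ j.succ.succ.succAbove) = 0 :=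
    h _ (Fin.succ_ne_zero _) (Fin.succ_succ_ne_one j)
  rw [rightMul_eq_sum_smulRight b, Fin.sum_univ_succ, Fin.sum_univ_succ, Fin.succ_zero_eq_one, h₀,
    h₁]
  simp [c2Operator, h_tail, sub_eq_add_neg]

variable [Module.Free R M] [Module.Finite R M]

lemma trace_smulRight_comp_smulRight {N : Type*} [AddCommMonoid N] [Module R N] (f : N →ₗ[R] R)
    (g : M →ₗ[R] R) (x : M) (y : N) :
    LinearMap.trace R M (f.smulRight x ∘ₗ g.smulRight y) = f y * g x := by
  have hcomp : f.smulRight x ∘ₗ g.smulRight y = f y • g.smulRight x := by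
    ext z
    simp [smul_smul, mul_comm]
  rw [hcomp, map_smul, LinearMap.trace_smulRight, smul_eq_mul]

variable {B C : LinearMap.BilinForm R M}

lemma trace_c2Operator (hB : B.IsAlt) (α : R) (x y : M) :
    LinearMap.trace R M (c2Operator α x y B) = B x y := by
  simp [c2Operator, LinearMap.trace_smulRight, hB.self_eq_zero]

lemma trace_c2Operator_comp (hB : B.IsAlt) (hC : C.IsAlt) (α : R) (x y : M) :
    LinearMap.trace R M (c2Operator α x y B ∘ₗ c2Operator α x y C) =
      (2 * α + 1) * (B x y * C x y) := by
  simp only [c2Operator, LinearMap.sub_comp, LinearMap.comp_sub, map_sub,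
    trace_smulRight_comp_smulRight, map_add, map_smul, hB.self_eq_zero, hC.self_eq_zero,
    ← hB.neg_eq x y, ← hC.neg_eq x y, smul_eq_mul]
  ring

end C2Operator

theorem C2_trace_invariant_general {R M : Type*} [CommRing R] [AddCommGroup M] [Module R M] {m : ℕ}
    (b : Module.Basis (Fin (m + 2)) R M) {α : R} {μ : M [⋀^Fin (m + 1)]→ₗ[R] M}
    (h₀ : μ (b ∘ Fin.succAbove 0) = α • b 0 + b 1) (h₁ : μ (b ∘ Fin.succAbove 1) = b 1)
    (h : ∀ j : Fin (m + 2), j ≠ 0 → j ≠ 1 → μ (b ∘ j.succAbove) = 0) (X Y : Fin m → M) :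
    LinearMap.trace R M (rightMul X μ ∘ₗ rightMul Y μ) =
      (2 * α + 1) * (LinearMap.trace R M (rightMul X μ) * LinearMap.trace R M (rightMul Y μ)) := by
  have : Module.Free R M := .of_basis b
  have : Module.Finite R M := .of_basis b
  have hX := leadingForm_isAlt b.det X
  have hY := leadingForm_isAlt b.det Y
  simp only [rightMul_eq_c2Operator b h₀ h₁ h, trace_c2Operator_comp hX hY, trace_c2Operator hX,
    trace_c2Operator hY]

lemma basisFun_comp_succAbove (n : ℕ) (j : Fin (n + 1)) :
    Pi.basisFun ℂ (Fin (n + 1)) ∘ j.succAbove = bt n j :=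
  funext fun k => Pi.basisFun_apply ℂ _ (j.succAbove k)

/-- For every integer `n = m + 1 ≥ 2`, every `α ∈ ℂ`, and all fundamental
objects `X, Y` of `C₂(α)` (with associated right multiplication operators
`R_X z = μ(z, X₁, …, X_{n-1})`, `R_Y`), one has
`tr(R_X ∘ R_Y) = (2α + 1) · tr(R_X) · tr(R_Y)`. -/
theorem C2_trace_invariant (m : ℕ) (hm : 1 ≤ m) (α : ℂ)
    (μ : AlternatingMap ℂ (nV (m + 1)) (nV (m + 1)) (Fin (m + 1))) (hμ : IsC2 (m + 1) α μ)
    (X Y : Fin m → nV (m + 1)) (RX RY : nV (m + 1) →ₗ[ℂ] nV (m + 1))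
    (hRX : ∀ z : nV (m + 1), RX z = μ (Fin.cons z X))
    (hRY : ∀ z : nV (m + 1), RY z = μ (Fin.cons z Y)) :
    LinearMap.trace ℂ (nV (m + 1)) (RX ∘ₗ RY) =
      (2 * α + 1) * (LinearMap.trace ℂ (nV (m + 1)) RX * LinearMap.trace ℂ (nV (m + 1)) RY) := by
  obtain rfl : RX = rightMul X μ := LinearMap.ext hRX
  obtain rfl : RY = rightMul Y μ := LinearMap.ext hRY
  obtain ⟨h₀, h₁, h⟩ := hμ
  simp only [← basisFun_comp_succAbove] at h₀ h₁ h
  exact C2_trace_invariant_general (Pi.basisFun ℂ _) (by simpa [sb] using h₀)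
    (by simpa [sb] using h₁) h X Y
end
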